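/- (Polynomial reproduction, Theorem 4.3.) Let n ≥ 2 be an integer, μ > 1 real, and m ≥ 1 an integer. Suppose φ : ℝ → ℝ is continuous and compactly supported and its Fourier transform ∫_ℝ φ(x) e^{-iωx} dx equals Φ^{(n,m)}(ω) for all ω ∈ ℝ. Then for every polynomial p of degree at most n − 2 there exists a sequence of real numbers (γ_α)_{α∈ℤ} such that p(x) = Σ_{α∈ℤ} γ_α φ(x − 2^{-m} α) for every x ∈ ℝ (the sum being locally finite since φ has compact support). -/

import Mathlib

open MeasureTheory Filter Complex

/-- Binomial coefficient `binom p q` extended to integer `q`, zero outside `0 ≤ q ≤ p`. -/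
noncomputable def binomZ (p : ℕ) (q : ℤ) : ℝ :=
  if 0 ≤ q then (p.choose q.toNat : ℝ) else 0

/-- The nonstationary mask `a^{(n,m)}_α` with tension parameter `μ`. -/
noncomputable def maskNS (n m : ℕ) (μ : ℝ) (α : ℤ) : ℝ :=
  if m = 0 then (if α = 0 ∨ α = 1 then 1/2 else 0)
  else if 0 ≤ α ∧ α ≤ (n : ℤ) + 1 then
    (2 : ℝ) ^ (-((n : ℝ) + 1 + (m : ℝ) ^ (-μ))) *
      (binomZ (n+1) α + 4 * ((2 : ℝ) ^ ((m : ℝ) ^ (-μ)) - 1) * binomZ (n-1) (α-1))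
  else 0

/-- The symbol `A^{(n,m)}(z) = Σ_{α=0}^{n+1} a^{(n,m)}_α z^α`. -/
noncomputable def symbolNS (n m : ℕ) (μ : ℝ) (z : ℂ) : ℂ :=
  ∑ α ∈ Finset.range (n+2), (maskNS n m μ (α : ℤ) : ℂ) * z ^ α

/-- Partial product `∏_{k=m}^{N-1} A^{(n,k)}(e^{-iω/2^{k+1}})` of the infinite product
defining the Fourier transform `Φ^{(n,m)}` of the refinable ripplet `φ^{(n,m)}`. -/
noncomputable def partialProdNS (n m : ℕ) (μ : ℝ) (ω : ℝ) (N : ℕ) : ℂ :=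
  ∏ k ∈ Finset.Ico m N, symbolNS n k μ (Complex.exp (-(Complex.I * ω) / 2 ^ (k + 1)))

/-!
The symbol factors as `A^{(n,k)}(z) = (1 + z)^{n-1} B_k(z)` with `B_k` a quadratic polynomial, and
since its coefficients are nonnegative with sum `1`, `‖A^{(n,k)}‖ ≤ 1` on the unit circle. Every
`ω₀ = 2π 2^m l` with `l ≠ 0` makes some factor of the infinite product be evaluated at `z = -1`,
so `Φ` vanishes there to order `n - 1`, while `Φ(0) = 1`: the Strang–Fix conditions hold. By
Poisson summation applied to `t ↦ t^j φ(t)`, the sums `∑ α, (x - hα)^j φ(x - hα)` with `j < n - 1`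
do not depend on `x`, and the one with `j = 0` is nonzero. Expanding `(hα)^k` in powers of
`x - hα` then shows that the coefficients `(hα)^k` produce a nonzero multiple of `x^k` plus terms
of lower degree, and induction on `k` concludes.
-/

section

open Asymptotics FourierTransform Topology

section IteratedDeriv

variable {E : Type*} [NormedAddCommGroup E] [NormedSpace ℝ E] {f : ℝ → E} {x₀ : ℝ}

lemma eq_zero_of_pow_smul_isLittleO {c : E} {n : ℕ}
    (h : (fun x : ℝ => (x - x₀) ^ n • c) =o[𝓝 x₀] fun x => (x - x₀) ^ n) : c = 0 := by
  have hlim : Tendsto (fun x : ℝ => ((x - x₀) ^ n)⁻¹ • (x - x₀) ^ n • c) (𝓝[≠] x₀) (𝓝 0) :=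
    (h.mono nhdsWithin_le_nhds).tendsto_inv_smul_nhds_zero
  refine tendsto_nhds_unique (tendsto_const_nhds.congr' ?_) hlim
  filter_upwards [self_mem_nhdsWithin] with x hx
  rw [inv_smul_smul₀ (pow_ne_zero n (sub_ne_zero.2 hx))]

theorem iteratedDeriv_eq_zero_of_isBigO_pow {j r : ℕ} (hf : ContDiff ℝ j f)
    (hO : f =O[𝓝 x₀] fun x => (x - x₀) ^ r) (hj : j < r) : iteratedDeriv j f x₀ = 0 := by
  induction j using Nat.strong_induction_on with
  | _ j ih =>
    have hlower : ∀ i < j, iteratedDeriv i f x₀ = 0 := fun i hi =>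
      ih i hi (hf.of_le (by exact_mod_cast hi.le)) (hi.trans hj)
    have htaylor : ∀ x, taylorWithinEval f j Set.univ x₀ x =
        (x - x₀) ^ j • ((j.factorial : ℝ)⁻¹ • iteratedDeriv j f x₀) := fun x => by
      rw [taylor_within_apply, Finset.sum_range_succ, Finset.sum_eq_zero, zero_add,
        iteratedDerivWithin_univ, smul_smul, mul_comm]
      intro i hi
      rw [iteratedDerivWithin_univ, hlower i (Finset.mem_range.1 hi), smul_zero]
    have ho : f =o[𝓝 x₀] fun x => (x - x₀) ^ j :=
      hO.trans_isLittleO <| isLittleO_norm_norm.1 <| by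
        simpa only [norm_pow] using isLittleO_pow_sub_pow_sub x₀ hj
    have hc := ho.sub (taylor_isLittleO_univ (x₀ := x₀) hf)
    simp only [sub_sub_cancel, htaylor] at hc
    exact (smul_eq_zero.1 (eq_zero_of_pow_smul_isLittleO hc)).resolve_left
      (inv_ne_zero (Nat.cast_ne_zero.2 j.factorial_ne_zero))

end IteratedDeriv

section Fourier

variable {E : Type*} [NormedAddCommGroup E] [NormedSpace ℂ E]

theorem fourier_pow_smul_eq_zero_of_isBigO_pow {f : ℝ → E} {w : ℝ} {j r : ℕ}
    (hf : ∀ k ≤ j, Integrable fun x : ℝ => (x : ℂ) ^ k • f x)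
    (hO : 𝓕 f =O[𝓝 w] fun ξ => (ξ - w) ^ r) (hj : j < r) :
    𝓕 (fun x : ℝ => (x : ℂ) ^ j • f x) w = 0 := by
  have hint : ∀ k : ℕ, (k : ℕ∞) ≤ j → Integrable fun x : ℝ => x ^ k • f x := fun k hk => by
    simpa only [← ofReal_pow, coe_smul] using hf k (by exact_mod_cast hk)
  have hsmooth : ContDiff ℝ (j : ℕ∞) (𝓕 f) := Real.contDiff_fourier fun k hk => by
    simpa [norm_smul] using (hint k hk).norm
  have hderiv := iteratedDeriv_eq_zero_of_isBigO_pow hsmooth hO hj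
  have hfactor : (fun x : ℝ => (-2 * Real.pi * I * x) ^ j • f x) =
      (-2 * Real.pi * I) ^ j • fun x : ℝ => (x : ℂ) ^ j • f x := by
    ext x
    rw [mul_pow, mul_smul, Pi.smul_apply]
  have hfourier : 𝓕 ((-2 * Real.pi * I) ^ j • fun x : ℝ => (x : ℂ) ^ j • f x) =
      (-2 * Real.pi * I) ^ j • 𝓕 (fun x : ℝ => (x : ℂ) ^ j • f x) :=
    VectorFourier.fourierIntegral_const_smul _ _ _ _ _
  rw [Real.iteratedDeriv_fourier hint le_rfl, hfactor, hfourier] at hderiv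
  exact (smul_eq_zero.1 hderiv).resolve_left (pow_ne_zero j (by simp [Real.pi_ne_zero]))

theorem fourier_comp_mul_left (f : ℝ → E) {c : ℝ} (hc : c ≠ 0) (w : ℝ) :
    𝓕 (fun x => f (c * x)) w = |c⁻¹| • 𝓕 f (w / c) := by
  rw [Real.fourier_real_eq, Real.fourier_real_eq, ← Measure.integral_comp_mul_left _ c]
  congr 1 with x
  rw [mul_right_comm, mul_div_cancel₀ _ hc, mul_comm w]

theorem tsum_comp_sub_mul_eq_integral {f : ℝ → ℂ} (hfc : Continuous f) (hfs : HasCompactSupport f)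
    {h : ℝ} (hh : h ≠ 0) (hz : ∀ l : ℤ, l ≠ 0 → 𝓕 f (l / h) = 0) (x : ℝ) :
    ∑' α : ℤ, f (x - h * α) = |h⁻¹| • ∫ t, f t := by
  set g : ℝ → ℂ := fun t => f (-h * t)
  have hgF : ∀ l : ℤ, 𝓕 g l = |h⁻¹| • 𝓕 f ((-l : ℤ) / h) := fun l => by
    rw [fourier_comp_mul_left f (neg_ne_zero.2 hh), inv_neg, abs_neg]
    push_cast
    rw [div_neg, neg_div]
  have hgF_zero : ∀ l : ℤ, l ≠ 0 → 𝓕 g l = 0 := fun l hl => by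
    rw [hgF, hz _ (neg_ne_zero.2 hl), smul_zero]
  have hgs : HasCompactSupport g :=
    hfs.comp_homeomorph (Homeomorph.mulLeft₀ (-h) (neg_ne_zero.2 hh))
  have hdecay : g =O[cocompact ℝ] fun t => |t| ^ (-2 : ℝ) := by
    rw [hasCompactSupport_iff_eventuallyEq, coclosedCompact_eq_cocompact] at hgs
    exact hgs.trans_isBigO (isBigO_zero _ _)
  have hpoisson := Real.tsum_eq_tsum_fourier_of_rpow_decay_of_summable (f := g) (by fun_prop)
    one_lt_two hdecay (summable_of_ne_finset_zero (s := {0}) (by simpa using hgF_zero)) (-x / h)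
  calc ∑' α : ℤ, f (x - h * α) = ∑' α : ℤ, g (-x / h + α) := by
        refine tsum_congr fun α => congrArg f ?_
        field_simp
        ring
    _ = 𝓕 g (0 : ℤ) * fourier 0 ((-x / h : ℝ) : UnitAddCircle) :=
        hpoisson.trans (tsum_eq_single 0 fun l hl => by rw [hgF_zero l hl, zero_mul])
    _ = |h⁻¹| • ∫ t, f t := by
        rw [hgF]
        simp [Real.fourier_real_eq]

end Fourier

section Shifts

lemma hasFiniteSupport_comp_sub_mul {M : Type*} [Zero M] {f : ℝ → M} (hf : HasCompactSupport f)
    {h : ℝ} (hh : h ≠ 0) (x : ℝ) : Function.HasFiniteSupport fun α : ℤ => f (x - h * α) := by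
  have hnodes : Tendsto (fun α : ℤ => x - h * α) cofinite (cocompact ℝ) :=
    ((Homeomorph.mulLeft₀ h hh).trans
      (Homeomorph.subLeft x)).isClosedEmbedding.tendsto_cocompact.comp Int.tendsto_coe_cofinite
  rw [hasCompactSupport_iff_eventuallyEq, coclosedCompact_eq_cocompact] at hf
  exact eventually_cofinite.1 (hnodes.eventually hf)

lemma summable_mul_comp_sub_mul {φ : ℝ → ℝ} (hφs : HasCompactSupport φ) {h : ℝ} (hh : h ≠ 0)
    (γ : ℤ → ℝ) (x : ℝ) : Summable fun α : ℤ => γ α * φ (x - h * α) :=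
  summable_of_hasFiniteSupport ((hasFiniteSupport_comp_sub_mul hφs hh x).mul_right γ)

variable {φ : ℝ → ℝ} (hφs : HasCompactSupport φ) {h : ℝ} (hh : h ≠ 0)

/-- The semi-discrete convolution `γ ↦ ∑ α, γ α * φ (· - h * α)`, whose range is the space
spanned by the shifts of `φ` along the grid of mesh `h`, infinite combinations being allowed. -/
noncomputable def shiftSeries : (ℤ → ℝ) →ₗ[ℝ] (ℝ → ℝ) where
  toFun γ x := ∑' α : ℤ, γ α * φ (x - h * α)
  map_add' γ δ := by
    ext x
    simp only [Pi.add_apply, add_mul]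
    exact (summable_mul_comp_sub_mul hφs hh γ x).tsum_add (summable_mul_comp_sub_mul hφs hh δ x)
  map_smul' c γ := by
    ext x
    simp only [Pi.smul_apply, smul_eq_mul, mul_assoc, RingHom.id_apply, tsum_mul_left]

lemma shiftSeries_apply (γ : ℤ → ℝ) (x : ℝ) :
    shiftSeries hφs hh γ x = ∑' α : ℤ, γ α * φ (x - h * α) :=
  rfl

lemma shiftSeries_pow_apply {r k : ℕ} {c : ℕ → ℝ}
    (hc : ∀ j < r, ∀ x, shiftSeries hφs hh (fun α => (x - h * α) ^ j) x = c j) (hk : k < r)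
    (x : ℝ) : shiftSeries hφs hh (fun α => (h * α) ^ k) x =
      ∑ j ∈ Finset.range (k + 1), (-1) ^ j * x ^ (k - j) * k.choose j * c j := by
  have hexpand : (fun α : ℤ => (h * α) ^ k) = ∑ j ∈ Finset.range (k + 1),
      ((-1) ^ j * x ^ (k - j) * k.choose j) • fun α : ℤ => (x - h * α) ^ j := by
    ext α
    calc (h * α) ^ k = (-(x - h * α) + x) ^ k := by ring
      _ = _ := by
        rw [add_pow, Finset.sum_apply]
        refine Finset.sum_congr rfl fun j _ => ?_
        rw [neg_pow, Pi.smul_apply, smul_eq_mul]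
        ring
  rw [hexpand, map_sum, Finset.sum_apply]
  refine Finset.sum_congr rfl fun j hj => ?_
  rw [map_smul, Pi.smul_apply, hc j ((Finset.mem_range_succ_iff.1 hj).trans_lt hk), smul_eq_mul]

theorem pow_mem_range_shiftSeries {r k : ℕ} {c : ℕ → ℝ} (hc₀ : c 0 ≠ 0)
    (hc : ∀ j < r, ∀ x, shiftSeries hφs hh (fun α => (x - h * α) ^ j) x = c j) (hk : k < r) :
    (fun x : ℝ => x ^ k) ∈ LinearMap.range (shiftSeries hφs hh) := by
  induction k using Nat.strong_induction_on with
  | _ k ih =>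
    have htriangular : shiftSeries hφs hh (fun α => (h * α) ^ k) = c 0 • (fun x => x ^ k) +
        ∑ j ∈ Finset.range k,
          ((-1) ^ (j + 1) * k.choose (j + 1) * c (j + 1)) • fun x => x ^ (k - (j + 1)) := by
      ext x
      rw [shiftSeries_pow_apply hφs hh hc hk, Finset.sum_range_succ', add_comm]
      simp only [Pi.add_apply, Pi.smul_apply, Finset.sum_apply, smul_eq_mul]
      congr 1
      · simp [mul_comm]
      · exact Finset.sum_congr rfl fun j _ => by ring
    have hlower : ∑ j ∈ Finset.range k,
        ((-1) ^ (j + 1) * k.choose (j + 1) * c (j + 1)) • (fun x : ℝ => x ^ (k - (j + 1))) ∈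
          LinearMap.range (shiftSeries hφs hh) :=
      Submodule.sum_mem _ fun j hj => by
        have := Finset.mem_range.1 hj
        exact Submodule.smul_mem _ _ (ih _ (by omega) (by omega))
    have hmem := LinearMap.mem_range_self (shiftSeries hφs hh) fun α => (h * α) ^ k
    rwa [htriangular, Submodule.add_mem_iff_left _ hlower, Submodule.smul_mem_iff _ hc₀] at hmem

end Shifts

section StrangFix

/-- The Strang–Fix conditions of order `r` on the grid of mesh `h`: the Fourier transform of `f`
does not vanish at the origin and vanishes to order `r` at the other points `l / h` of the dual
grid. Mathlib's transform has kernel `exp (-2πixξ)`, so the dual grid carries no factor `2π`. -/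
structure StrangFix (f : ℝ → ℂ) (h : ℝ) (r : ℕ) : Prop where
  fourier_zero_ne : 𝓕 f 0 ≠ 0
  isBigO_pow : ∀ l : ℤ, l ≠ 0 → 𝓕 f =O[𝓝 (l / h)] fun ξ => (ξ - l / h) ^ r

variable {φ : ℝ → ℝ} {h : ℝ} {r : ℕ}

theorem StrangFix.shiftSeries_sub_pow_apply (hSF : StrangFix (fun x => φ x) h r)
    (hφc : Continuous φ) (hφs : HasCompactSupport φ) (hh : h ≠ 0) {j : ℕ} (hj : j < r) (x : ℝ) :
    shiftSeries hφs hh (fun α => (x - h * α) ^ j) x = |h⁻¹| * ∫ t, t ^ j * φ t := by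
  have hcont : ∀ k : ℕ, Continuous fun t : ℝ => (t : ℂ) ^ k • (φ t : ℂ) := fun k => by fun_prop
  have hsupp : ∀ k : ℕ, HasCompactSupport fun t : ℝ => (t : ℂ) ^ k • (φ t : ℂ) := fun k =>
    HasCompactSupport.smul_left (f := fun t : ℝ => (t : ℂ) ^ k) (hφs.comp_left ofReal_zero)
  have hint : ∀ k ≤ j, Integrable fun t : ℝ => (t : ℂ) ^ k • (φ t : ℂ) := fun k _ =>
    (hcont k).integrable_of_hasCompactSupport (hsupp k)
  have hmoment : ∀ l : ℤ, l ≠ 0 → 𝓕 (fun t : ℝ => (t : ℂ) ^ j • (φ t : ℂ)) (l / h) = 0 :=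
    fun l hl =>
      fourier_pow_smul_eq_zero_of_isBigO_pow hint (hSF.isBigO_pow l hl) hj
  have hpoisson := tsum_comp_sub_mul_eq_integral (hcont j) (hsupp j) hh hmoment x
  simp only [smul_eq_mul, real_smul, ← ofReal_pow, ← ofReal_mul, ← ofReal_tsum,
    integral_complex_ofReal] at hpoisson
  rw [shiftSeries_apply]
  exact_mod_cast hpoisson

theorem StrangFix.eval_mem_range_shiftSeries (hSF : StrangFix (fun x => φ x) h r)
    (hφc : Continuous φ) (hφs : HasCompactSupport φ) (hh : h ≠ 0) {p : Polynomial ℝ}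
    (hp : p.degree < r) : (fun x => p.eval x) ∈ LinearMap.range (shiftSeries hφs hh) := by
  have hmean : ∫ t, φ t ≠ 0 := fun h₀ => hSF.fourier_zero_ne <| by
    simp [Real.fourier_real_eq, integral_complex_ofReal, h₀]
  have hc₀ : |h⁻¹| * ∫ t, t ^ 0 * φ t ≠ 0 := by simpa [hh] using hmean
  have hsum : (fun x => p.eval x) = ∑ k : Fin r, p.coeff k • fun x : ℝ => x ^ (k : ℕ) := by
    ext x
    rw [Polynomial.eval_eq_sum, ← Polynomial.sum_fin _ (by simp) hp]
    simp
  rw [hsum]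
  exact Submodule.sum_mem _ fun k _ => Submodule.smul_mem _ _ <|
    pow_mem_range_shiftSeries hφs hh hc₀
      (fun j hj => hSF.shiftSeries_sub_pow_apply hφc hφs hh hj) k.isLt

end StrangFix

section Symbol

lemma binomZ_natCast (p q : ℕ) : binomZ p q = p.choose q := by
  simp [binomZ]

lemma binomZ_nonneg (p : ℕ) (q : ℤ) : 0 ≤ binomZ p q := by
  unfold binomZ
  positivity

lemma sum_binomZ_mul_pow {p N : ℕ} (h : p < N) (z : ℂ) :
    ∑ α ∈ Finset.range N, (binomZ p α : ℂ) * z ^ α = (1 + z) ^ p := by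
  have htail : ∀ α ∈ Finset.range N, α ∉ Finset.range (p + 1) →
      (binomZ p α : ℂ) * z ^ α = 0 := fun α _ hα => by
    rw [binomZ_natCast, Nat.choose_eq_zero_of_lt (by simpa using hα)]
    simp
  rw [← Finset.sum_subset (Finset.range_subset_range.2 h) htail, add_comm, add_pow]
  refine Finset.sum_congr rfl fun α _ => ?_
  rw [binomZ_natCast, ofReal_natCast, one_pow, mul_one, mul_comm]

lemma sum_binomZ_sub_one_mul_pow {p N : ℕ} (h : p < N) (z : ℂ) :
    ∑ α ∈ Finset.range (N + 1), (binomZ p (α - 1) : ℂ) * z ^ α = (1 + z) ^ p * z := by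
  rw [Finset.sum_range_succ', ← sum_binomZ_mul_pow h, Finset.sum_mul]
  simp [binomZ, pow_succ, mul_assoc]

lemma maskNS_nonneg (n k : ℕ) (μ : ℝ) (α : ℤ) : 0 ≤ maskNS n k μ α := by
  have htension : (0 : ℝ) ≤ 2 ^ (k : ℝ) ^ (-μ) - 1 := sub_nonneg.2 <|
    Real.one_le_rpow one_le_two (by positivity)
  have hweight : 0 ≤ binomZ (n + 1) α + 4 * (2 ^ (k : ℝ) ^ (-μ) - 1) * binomZ (n - 1) (α - 1) :=
    add_nonneg (binomZ_nonneg _ _) (mul_nonneg (by positivity) (binomZ_nonneg _ _))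
  unfold maskNS
  positivity

variable (n : ℕ) {k : ℕ} (μ : ℝ)

lemma maskNS_succ_natCast (hk : k ≠ 0) {α : ℕ} (hα : α < n + 3) : maskNS (n + 1) k μ α =
    2 ^ (-(n + 2 + (k : ℝ) ^ (-μ))) *
      (binomZ (n + 2) α + 4 * (2 ^ (k : ℝ) ^ (-μ) - 1) * binomZ n (α - 1)) := by
  have hsupp : (0 : ℤ) ≤ α ∧ (α : ℤ) ≤ (n + 1 : ℕ) + 1 := by omega
  have hexp : ((n + 1 : ℕ) : ℝ) + 1 = n + 2 := by
    push_cast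
    ring
  rw [maskNS, if_neg hk, if_pos hsupp, hexp, Nat.add_sub_cancel]

theorem symbolNS_succ (hk : k ≠ 0) (z : ℂ) : symbolNS (n + 1) k μ z =
    ((2 ^ (-(n + 2 + (k : ℝ) ^ (-μ))) : ℝ) : ℂ) *
      ((1 + z) ^ 2 + ((4 * (2 ^ (k : ℝ) ^ (-μ) - 1) : ℝ) : ℂ) * z) * (1 + z) ^ n := by
  have hterm : ∀ α ∈ Finset.range (n + 3), (maskNS (n + 1) k μ α : ℂ) * z ^ α =
      ((2 ^ (-(n + 2 + (k : ℝ) ^ (-μ))) : ℝ) : ℂ) * (binomZ (n + 2) α * z ^ α +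
        ((4 * (2 ^ (k : ℝ) ^ (-μ) - 1) : ℝ) : ℂ) * (binomZ n (α - 1) * z ^ α)) := fun α hα => by
    rw [maskNS_succ_natCast n μ hk (Finset.mem_range.1 hα), ofReal_mul, ofReal_add,
      ofReal_mul (4 * _)]
    ring
  rw [symbolNS, Finset.sum_congr rfl hterm, ← Finset.mul_sum, Finset.sum_add_distrib,
    ← Finset.mul_sum, sum_binomZ_mul_pow (by omega), sum_binomZ_sub_one_mul_pow (by omega)]
  ring

theorem symbolNS_succ_one (hk : k ≠ 0) : symbolNS (n + 1) k μ 1 = 1 := by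
  have hreal : (2 : ℝ) ^ (-(n + 2 + (k : ℝ) ^ (-μ))) *
      ((1 + 1) ^ 2 + 4 * (2 ^ (k : ℝ) ^ (-μ) - 1) * 1) * (1 + 1) ^ n = 1 := by
    have hpow : (2 : ℝ) ^ ((n : ℝ) + 2) = 2 ^ (n + 2) := by
      exact_mod_cast Real.rpow_natCast 2 (n + 2)
    rw [Real.rpow_neg two_pos.le, Real.rpow_add two_pos, hpow]
    field_simp
    ring
  rw [symbolNS_succ n μ hk]
  exact_mod_cast hreal

theorem norm_symbolNS_succ_le_one (hk : k ≠ 0) {z : ℂ} (hz : ‖z‖ ≤ 1) :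
    ‖symbolNS (n + 1) k μ z‖ ≤ 1 := by
  have hsum : ∑ α ∈ Finset.range (n + 3), maskNS (n + 1) k μ α = 1 := by
    have hone := symbolNS_succ_one n μ hk
    simp only [symbolNS, one_pow, mul_one] at hone
    exact_mod_cast hone
  calc ‖symbolNS (n + 1) k μ z‖
      ≤ ∑ α ∈ Finset.range (n + 3), ‖(maskNS (n + 1) k μ α : ℂ) * z ^ α‖ := norm_sum_le _ _
    _ ≤ ∑ α ∈ Finset.range (n + 3), maskNS (n + 1) k μ α := Finset.sum_le_sum fun α _ => by
        rw [norm_mul, norm_pow, norm_real, Real.norm_of_nonneg (maskNS_nonneg ..)]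
        exact mul_le_of_le_one_right (maskNS_nonneg ..) (pow_le_one₀ (norm_nonneg z) hz)
    _ = 1 := hsum

theorem symbolNS_succ_isBigO_pow (hk : k ≠ 0) :
    symbolNS (n + 1) k μ =O[𝓝 (-1)] fun z => (1 + z) ^ n := by
  have hcofactor : (fun z : ℂ => ((2 ^ (-(n + 2 + (k : ℝ) ^ (-μ))) : ℝ) : ℂ) *
      ((1 + z) ^ 2 + ((4 * (2 ^ (k : ℝ) ^ (-μ) - 1) : ℝ) : ℂ) * z)) =O[𝓝 (-1)]
        fun _ => (1 : ℂ) :=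
    (ContinuousAt.tendsto (by fun_prop)).isBigO_one ℂ
  simpa only [← symbolNS_succ n μ hk, one_mul] using
    hcofactor.mul (isBigO_refl (fun z : ℂ => (1 + z) ^ n) (𝓝 (-1)))

end Symbol

section LimitTransform

lemma norm_le_norm_of_tendsto_prod_Ico {𝕜 : Type*} [NormedField 𝕜] {a : ℕ → 𝕜} {L : 𝕜} {m : ℕ}
    (ha : ∀ i ≥ m, ‖a i‖ ≤ 1)
    (hL : Tendsto (fun N => ∏ i ∈ Finset.Ico m N, a i) atTop (𝓝 L)) {k : ℕ} (hk : m ≤ k) :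
    ‖L‖ ≤ ‖a k‖ := by
  refine le_of_tendsto hL.norm ?_
  filter_upwards [eventually_gt_atTop k] with N hN
  rw [← Finset.mul_prod_erase _ _ (Finset.mem_Ico.2 ⟨hk, hN⟩), norm_mul, norm_prod]
  refine mul_le_of_le_one_right (norm_nonneg _) <|
    Finset.prod_le_one (fun _ _ => norm_nonneg _) fun i hi => ?_
  exact ha i (Finset.mem_Ico.1 (Finset.mem_of_mem_erase hi)).1

lemma norm_exp_neg_I_mul_div (ω : ℝ) (k : ℕ) : ‖exp (-(I * ω) / 2 ^ (k + 1))‖ = 1 := by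
  rw [norm_exp]
  simp [← ofReal_ofNat, ← ofReal_pow, div_ofReal_re]

lemma exists_exp_neg_I_mul_div_eq_neg_one {l : ℤ} (hl : l ≠ 0) (m : ℕ) :
    ∃ k ≥ m, exp (-(I * ((2 * Real.pi * (l * 2 ^ m) : ℝ) : ℂ)) / 2 ^ (k + 1)) = -1 := by
  obtain ⟨q, hlq, hq⟩ := (Int.finiteMultiplicity_iff.2
    ⟨by decide, hl⟩ : FiniteMultiplicity 2 l).exists_eq_pow_mul_and_not_dvd
  have hq_odd : Odd (-q) := (Int.not_even_iff_odd.1 (even_iff_two_dvd.not.2 hq)).neg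
  refine ⟨m + multiplicity 2 l, Nat.le_add_right _ _, ?_⟩
  have hangle : -(I * ((2 * Real.pi * (l * 2 ^ m) : ℝ) : ℂ)) / 2 ^ (m + multiplicity 2 l + 1) =
      (-q : ℤ) * (Real.pi * I) := by
    generalize multiplicity 2 l = t at hlq ⊢
    rw [hlq]
    push_cast
    field_simp
    ring
  rw [hangle, exp_int_mul, exp_pi_mul_I, hq_odd.neg_one_zpow]

variable {n m : ℕ} {μ : ℝ} {Φ : ℝ → ℂ}

lemma limit_partialProdNS_zero (hm : m ≠ 0) {c : ℂ}
    (hc : Tendsto (partialProdNS (n + 1) m μ 0) atTop (𝓝 c)) : c = 1 := by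
  refine tendsto_nhds_unique hc (tendsto_const_nhds.congr fun N => ?_)
  refine (Finset.prod_eq_one fun k hk => ?_).symm
  have := (Finset.mem_Ico.1 hk).1
  simp [symbolNS_succ_one n μ (by omega : k ≠ 0)]

theorem limit_partialProdNS_isBigO_pow (hm : m ≠ 0)
    (hΦ : ∀ ω, Tendsto (partialProdNS (n + 1) m μ ω) atTop (𝓝 (Φ ω))) {k : ℕ} (hk : m ≤ k)
    {ω₀ : ℝ} (hω₀ : exp (-(I * ω₀) / 2 ^ (k + 1)) = -1) :
    Φ =O[𝓝 ω₀] fun ω => (ω - ω₀) ^ n := by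
  set e : ℝ → ℂ := fun ω => exp (-(I * ω) / 2 ^ (k + 1))
  have he : DifferentiableAt ℝ e ω₀ := by fun_prop
  have he_tendsto : Tendsto e (𝓝 ω₀) (𝓝 (-1)) := hω₀ ▸ he.continuousAt
  have he_zero : (fun ω => 1 + e ω) =O[𝓝 ω₀] fun ω => ω - ω₀ := by
    simpa [e, hω₀, add_comm] using he.isBigO_sub
  have hfactor : Φ =O[𝓝 ω₀] fun ω => symbolNS (n + 1) k μ (e ω) :=
    isBigO_of_le _ fun ω => norm_le_norm_of_tendsto_prod_Ico
      (fun i hi => norm_symbolNS_succ_le_one n μ (by omega) (norm_exp_neg_I_mul_div ω i).le)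
      (hΦ ω) hk
  exact hfactor.trans <| ((symbolNS_succ_isBigO_pow n μ (by omega)).comp_tendsto he_tendsto).trans
    (he_zero.pow n)

theorem strangFix_of_tendsto_partialProdNS {f : ℝ → ℂ} (hm : m ≠ 0)
    (hΦ : ∀ ω, Tendsto (partialProdNS (n + 1) m μ ω) atTop (𝓝 (Φ ω)))
    (hf : ∀ ω : ℝ, ∫ x : ℝ, f x * exp (-(I * ω * x)) = Φ ω) :
    StrangFix f (2 ^ (-(m : ℤ))) n := by
  have hfourier : ∀ ξ, 𝓕 f ξ = Φ (2 * Real.pi * ξ) := fun ξ => by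
    rw [Real.fourier_real_eq_integral_exp_smul, ← hf]
    refine integral_congr_ae (.of_forall fun x => ?_)
    simp only [smul_eq_mul]
    rw [mul_comm]
    congr 2
    push_cast
    ring
  refine ⟨?_, fun l hl => ?_⟩
  · rw [hfourier, mul_zero, limit_partialProdNS_zero hm (hΦ 0)]
    exact one_ne_zero
  · rw [zpow_neg, zpow_natCast, div_inv_eq_mul, funext hfourier]
    obtain ⟨k, hmk, hk⟩ := exists_exp_neg_I_mul_div_eq_neg_one hl m
    have hscale : Tendsto (fun ξ => 2 * Real.pi * ξ) (𝓝 (l * 2 ^ m))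
        (𝓝 (2 * Real.pi * (l * 2 ^ m))) := (continuous_const_mul _).tendsto _
    refine ((limit_partialProdNS_isBigO_pow hm hΦ hmk hk).comp_tendsto hscale).trans ?_
    simp only [Function.comp_def, ← mul_sub, mul_pow]
    exact isBigO_const_mul_self _ _ _

end LimitTransform

end

theorem polynomial_reproduction_general (n : ℕ) (hn : 2 ≤ n) (μ : ℝ)
    (m : ℕ) (hm : 1 ≤ m)
    (Φ : ℝ → ℂ)
    (hΦ : ∀ ω : ℝ, Tendsto (fun N => partialProdNS n m μ ω N) atTop (nhds (Φ ω)))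
    (φ : ℝ → ℝ) (hφc : Continuous φ) (hφs : HasCompactSupport φ)
    (hφF : ∀ ω : ℝ, ∫ x : ℝ, (φ x : ℂ) * Complex.exp (-(Complex.I * ω * x)) = Φ ω) :
    ∀ p : Polynomial ℝ, p.degree ≤ (n - 2 : ℕ) →
      ∃ γ : ℤ → ℝ, ∀ x : ℝ,
        p.eval x = ∑' α : ℤ, γ α * φ (x - (2 : ℝ) ^ (-(m : ℤ)) * α) := by
  intro p hp
  obtain ⟨r, rfl⟩ : ∃ r, n = r + 1 := ⟨n - 1, by omega⟩
  have hSF : StrangFix (fun x => φ x) (2 ^ (-(m : ℤ))) r :=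
    strangFix_of_tendsto_partialProdNS (by omega) hΦ hφF
  have hdeg : p.degree < r := hp.trans_lt (by exact_mod_cast (by omega : r + 1 - 2 < r))
  obtain ⟨γ, hγ⟩ := hSF.eval_mem_range_shiftSeries hφc hφs (by positivity) hdeg
  exact ⟨γ, fun x => (congrFun hγ x).symm⟩

/-- Polynomial reproduction (Theorem 4.3): if `φ` is the continuous compactly supported
refinable ripplet with Fourier transform `Φ^{(n,m)}` (`m ≥ 1`), then every polynomial of
degree at most `n − 2` lies in the span of the `2^{-m}`-shifts of `φ`. -/
theorem polynomial_reproduction (n : ℕ) (hn : 2 ≤ n) (μ : ℝ) (hμ : 1 < μ)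
    (m : ℕ) (hm : 1 ≤ m)
    (Φ : ℝ → ℂ)
    (hΦ : ∀ ω : ℝ, Tendsto (fun N => partialProdNS n m μ ω N) atTop (nhds (Φ ω)))
    (φ : ℝ → ℝ) (hφc : Continuous φ) (hφs : HasCompactSupport φ)
    (hφF : ∀ ω : ℝ, ∫ x : ℝ, (φ x : ℂ) * Complex.exp (-(Complex.I * ω * x)) = Φ ω) :
    ∀ p : Polynomial ℝ, p.degree ≤ (n - 2 : ℕ) →
      ∃ γ : ℤ → ℝ, ∀ x : ℝ,
        p.eval x = ∑' α : ℤ, γ α * φ (x - (2 : ℝ) ^ (-(m : ℤ)) * α) :=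
  polynomial_reproduction_general n hn μ m hm Φ hΦ φ hφc hφs hφF
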